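/- Let k be a field and A a finite-dimensional k-algebra such that A/rad(A) is a separable k-algebra. If the trivial extension algebra T(A) is twisted periodic, then A has finite global dimension. -/

import Mathlib

open TensorProduct

/-- There is an exact sequence `0 → M → P_n → ⋯ → P_1 → N → 0` of `R`-modules
(so with `n` middle terms) in which each middle term `P_i` is projective. -/
def HasProjExactSeq (R : Type) [Ring R] (M N : ModuleCat R) (n : ℕ) : Prop :=
  ∃ (P : ℕ → ModuleCat R) (d : ∀ i, P (i + 1) →ₗ[R] P i)
    (_ : (P 0 : Type) ≃ₗ[R] N) (_ : (M : Type) ≃ₗ[R] P (n + 1)),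
    (∀ i, 1 ≤ i → i ≤ n → Module.Projective R (P i)) ∧
    Function.Surjective (d 0) ∧ Function.Injective (d n) ∧
    ∀ i < n, LinearMap.range (d (i + 1)) = LinearMap.ker (d i)

/-- The regular bimodule `B` as a module over the enveloping algebra `B ⊗[k] Bᵐᵒᵖ`. -/
noncomputable def regularBimodule (k B : Type) [Field k] [Ring B] [Algebra k B] :
    ModuleCat (B ⊗[k] Bᵐᵒᵖ) :=
  letI : Module (B ⊗[k] Bᵐᵒᵖ) B := TensorProduct.Algebra.module
  ModuleCat.of _ B

/-- The twisted bimodule `₁B_φ` (underlying set `B`, right action twisted by `φ`,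
i.e. `a • x • b = a * x * φ b`) as a module over the enveloping algebra `B ⊗[k] Bᵐᵒᵖ`. -/
noncomputable def twistedBimodule (k B : Type) [Field k] [Ring B] [Algebra k B]
    (φ : B ≃ₐ[k] B) : ModuleCat (B ⊗[k] Bᵐᵒᵖ) :=
  letI : Module (B ⊗[k] Bᵐᵒᵖ) B := TensorProduct.Algebra.module
  letI : Module (B ⊗[k] Bᵐᵒᵖ) B :=
    Module.compHom B
      (Algebra.TensorProduct.map (AlgHom.id k B) (AlgEquiv.op φ).toAlgHom).toRingHom
  ModuleCat.of _ B

/-- A finite-dimensional `k`-algebra `B` is twisted periodic if there are `n ≥ 1`, an algebra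
automorphism `φ` of `B`, and an exact sequence `0 → ₁B_φ → P_{n-1} → ⋯ → P_0 → B → 0` of
bimodules with all `P_i` projective over `B ⊗[k] Bᵐᵒᵖ`. -/
noncomputable def IsTwistedPeriodicAlgebra (k B : Type) [Field k] [Ring B] [Algebra k B] : Prop :=
  ∃ (n : ℕ) (φ : B ≃ₐ[k] B), 1 ≤ n ∧
    HasProjExactSeq (B ⊗[k] Bᵐᵒᵖ) (twistedBimodule k B φ) (regularBimodule k B) n

/-- The `R`-module `M` has projective dimension at most `d`: there is a projective
resolution `⋯ → P_1 → P_0 → M → 0` which vanishes in degrees `> d`. -/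
def ProjDimLE (R : Type) [Ring R] (M : Type) [AddCommGroup M] [Module R M] (d : ℕ) : Prop :=
  ∃ (P : ℕ → ModuleCat R) (f : ∀ i, P (i + 1) →ₗ[R] P i) (π : (P 0 : Type) →ₗ[R] M),
    (∀ i, Module.Projective R (P i)) ∧ Function.Surjective π ∧
    LinearMap.range (f 0) = LinearMap.ker π ∧
    (∀ i, LinearMap.range (f (i + 1)) = LinearMap.ker (f i)) ∧
    ∀ i, d < i → Subsingleton (P i)

/-- The ring `R` has finite global dimension: there is a `d` such that every `R`-module has
projective dimension at most `d`. -/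
def HasFiniteGlobalDimension (R : Type) [Ring R] : Prop :=
  ∃ d : ℕ, ∀ (M : Type) [AddCommGroup M] [Module R M], ProjDimLE R M d

section DualBimodule

variable (k A : Type) [Field k] [Ring A] [Algebra k A]

/-- The left `A`-action on `D(A) = Hom_k(A, k)`, given by `(a • f) x = f (x * a)`. -/
noncomputable instance Module.Dual.leftModule : Module A (Module.Dual k A) where
  smul a f := f ∘ₗ LinearMap.mulRight k a
  one_smul f := LinearMap.ext fun x => by show f (x * 1) = f x; rw [mul_one]
  mul_smul a b f := LinearMap.ext fun x => by
    show f (x * (a * b)) = f (x * a * b); rw [mul_assoc]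
  smul_zero a := LinearMap.ext fun x => by show (0 : Module.Dual k A) (x * a) = 0; rfl
  smul_add a f g := LinearMap.ext fun x => by
    show (f + g) (x * a) = f (x * a) + g (x * a); rfl
  add_smul a b f := LinearMap.ext fun x => by
    show f (x * (a + b)) = f (x * a) + f (x * b); rw [mul_add, map_add]
  zero_smul f := LinearMap.ext fun x => by show f (x * 0) = 0; rw [mul_zero, map_zero]

/-- The right `A`-action on `D(A) = Hom_k(A, k)`, given by `(f • op b) x = f (b * x)`. -/
noncomputable instance Module.Dual.rightModule : Module Aᵐᵒᵖ (Module.Dual k A) where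
  smul b f := f ∘ₗ LinearMap.mulLeft k b.unop
  one_smul f := LinearMap.ext fun x => by show f (1 * x) = f x; rw [one_mul]
  mul_smul a b f := LinearMap.ext fun x => by
    show f ((a * b).unop * x) = f (b.unop * (a.unop * x))
    rw [MulOpposite.unop_mul, mul_assoc]
  smul_zero a := LinearMap.ext fun x => by show (0 : Module.Dual k A) (a.unop * x) = 0; rfl
  smul_add a f g := LinearMap.ext fun x => by
    show (f + g) (a.unop * x) = f (a.unop * x) + g (a.unop * x); rfl
  add_smul a b f := LinearMap.ext fun x => by
    show f ((a + b).unop * x) = f (a.unop * x) + f (b.unop * x)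
    rw [MulOpposite.unop_add, add_mul, map_add]
  zero_smul f := LinearMap.ext fun x => by
    show f ((0 : Aᵐᵒᵖ).unop * x) = 0
    rw [MulOpposite.unop_zero, zero_mul, map_zero]

instance : SMulCommClass A Aᵐᵒᵖ (Module.Dual k A) where
  smul_comm a b f := LinearMap.ext fun x => by
    show f (b.unop * (x * a)) = f (b.unop * x * a); rw [mul_assoc]

instance : IsScalarTower k A (Module.Dual k A) where
  smul_assoc c a f := LinearMap.ext fun x => by
    show f (x * (c • a)) = c • f (x * a)
    rw [mul_smul_comm, map_smul]

instance : IsScalarTower k Aᵐᵒᵖ (Module.Dual k A) where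
  smul_assoc c b f := LinearMap.ext fun x => by
    show f ((c • b).unop * x) = c • f (b.unop * x)
    rw [MulOpposite.unop_smul, smul_mul_assoc, map_smul]

/-- The trivial extension algebra `T(A) = A ⊕ D(A)`. -/
noncomputable abbrev TrivialExtension : Type := TrivSqZeroExt A (Module.Dual k A)

end DualBimodule

/-!
Write `B = T(A)`, let `g : B → A` be the projection, with kernel `I = D(A)`, and let
`S = A / rad A`. All terms of the given sequence of bimodules are projective as right modules, so
`- ⊗_B S` keeps it exact and exhibits `L = B_φ ⊗_B S` as an `n`-th syzygy of `S` over `B`. Since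
`I ⊆ rad B` and `φ` preserves `rad B`, the ideal `I` annihilates `L`.

Now compare with an `n`-th syzygy `N` of `S` over `A`. Lifting `S → S → S` along the two resolutions
gives semilinear maps `N → L → N` whose composite differs from the identity by a map factoring
through a projective module. The map `L → N` is restricted from a projective `B`-module containing
`L`. An element of a projective `B`-module annihilated by `I` has all its coordinates in `I`,
because the functionals in `D(A)` separate the points of `A`; hence it dies under any
`g`-semilinear map. So `L → N` is zero, `N` is projective and `S` has projective dimension at most
`n` over `A`. As `rad A` is nilpotent with semisimple quotient, every `A`-module is an iterated
extension of direct summands of direct sums of copies of `S`, and the same bound holds for it.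
-/

namespace TwistedPeriodic

open CategoryTheory

universe v u

/-! ### Syzygies -/

section Syzygy

variable {C : Type u} [Category.{v} C] [Abelian C]

/-- `IsSyzygy M n L`: the object `L` is an `n`-th syzygy of `M`, that is, there is an exact sequence
`0 → L → Pₙ₋₁ → ⋯ → P₀ → M → 0` with projective middle terms. The sequence is encoded as a splice of
`n` short exact sequences. -/
inductive IsSyzygy (M : C) : ℕ → C → Prop
  | refl : IsSyzygy M 0 M
  | of_iso {n : ℕ} {L L' : C} (e : L ≅ L') (h : IsSyzygy M n L) : IsSyzygy M n L'
  | succ {n : ℕ} {S : ShortComplex C} (hS : S.ShortExact) (hP : Projective S.X₂)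
      (h : IsSyzygy M n S.X₃) : IsSyzygy M (n + 1) S.X₁

theorem IsSyzygy.hasProjectiveDimensionLT {M L : C} {n m : ℕ} (h : IsSyzygy M n L)
    (hL : HasProjectiveDimensionLT L (m + 1)) : HasProjectiveDimensionLT M (m + 1 + n) := by
  induction h generalizing m with
  | refl => exact hL
  | of_iso e _ ih => exact ih (hasProjectiveDimensionLT_of_iso e.symm _)
  | @succ n S hS hP _ ih =>
    rw [Nat.add_comm n 1, ← Nat.add_assoc]
    exact ih ((hS.hasProjectiveDimensionLT_X₃_iff m hP).2 hL)

end Syzygy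

section HasProjExactSeq

variable {R : Type} [Ring R]

theorem isSyzygy_range_of_exact {N : ModuleCat.{0} R} {P : ℕ → ModuleCat.{0} R}
    (d : ∀ i, P (i + 1) →ₗ[R] P i) (e : P 0 ≃ₗ[R] N) (hsurj : Function.Surjective (d 0)) {n : ℕ}
    (hP : ∀ i, 1 ≤ i → i ≤ n → Module.Projective R (P i))
    (hexact : ∀ i < n, LinearMap.range (d (i + 1)) = LinearMap.ker (d i)) {j : ℕ} (hj : j ≤ n) :
    IsSyzygy N j (ModuleCat.of R (LinearMap.range (d j))) := by
  induction j with
  | zero =>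
    exact .of_iso
      (e.symm.trans (LinearEquiv.ofTop _ (LinearMap.range_eq_top.2 hsurj)).symm).toModuleIso .refl
  | succ j ih =>
    have hS := LinearMap.shortExact_shortComplexKer (d j).surjective_rangeRestrict
    rw [hexact j hj, ← LinearMap.ker_rangeRestrict]
    have := hP (j + 1) j.succ_pos hj
    exact .succ hS (ModuleCat.projective_of_categoryTheory_projective _) (ih (by lia))

theorem isSyzygy_of_hasProjExactSeq {M N : ModuleCat.{0} R} {n : ℕ} (h : HasProjExactSeq R M N n) :
    IsSyzygy N n M := by
  obtain ⟨P, d, e₀, e, hP, hsurj, hinj, hexact⟩ := h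
  exact .of_iso (e.trans (LinearEquiv.ofInjective (d n) hinj)).symm.toModuleIso
    (isSyzygy_range_of_exact d e₀ hsurj hP hexact le_rfl)

end HasProjExactSeq

/-! ### Stable retracts and their syzygies -/

section SemilinearLift

variable {R S : Type*} [Ring R] [Ring S] {σ : R →+* S}
  {P : Type*} [AddCommGroup P] [Module R P] [Module.Projective R P]
  {X Y : Type*} [AddCommGroup X] [Module S X] [AddCommGroup Y] [Module S Y]

theorem exists_semilinear_lift (d : X →ₗ[S] Y) (hd : Function.Surjective d) (h : P →ₛₗ[σ] Y) :
    ∃ h' : P →ₛₗ[σ] X, ∀ p, d (h' p) = h p := by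
  let : Module R X := Module.compHom X σ
  let : Module R Y := Module.compHom Y σ
  let dR : X →ₗ[R] Y := { d with map_smul' := fun r x => d.map_smul (σ r) x }
  let hR : P →ₗ[R] Y := { h with map_smul' := h.map_smul' }
  obtain ⟨l, hl⟩ := Module.projective_lifting_property dR hR hd
  exact ⟨{ l with map_smul' := l.map_smul' }, LinearMap.congr_fun hl⟩

end SemilinearLift

section FactorsThroughProjective

variable {R : Type u} [Ring R] {M N : Type u} [AddCommGroup M] [Module R M]
  [AddCommGroup N] [Module R N]

/-- The linear map `h` vanishes in the stable module category: it factors through a projective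
module. -/
def FactorsThroughProjective (h : M →ₗ[R] N) : Prop :=
  ∃ (Q : Type u) (_ : AddCommGroup Q) (_ : Module R Q) (_ : Module.Projective R Q)
    (a : M →ₗ[R] Q) (b : Q →ₗ[R] N), b ∘ₗ a = h

theorem FactorsThroughProjective.exists_lift {h : M →ₗ[R] N} (hh : FactorsThroughProjective h)
    {F : Type*} [AddCommGroup F] [Module R F] (π : F →ₗ[R] N) (hπ : Function.Surjective π) :
    ∃ h' : M →ₗ[R] F, π ∘ₗ h' = h := by
  obtain ⟨Q, _, _, _, a, b, rfl⟩ := hh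
  obtain ⟨b', rfl⟩ := Module.projective_lifting_property π b hπ
  exact ⟨b' ∘ₗ a, rfl⟩

theorem FactorsThroughProjective.projective
    (h : FactorsThroughProjective (LinearMap.id : M →ₗ[R] M)) : Module.Projective R M := by
  obtain ⟨Q, _, _, _, a, b, hba⟩ := h
  exact .of_split a b hba

end FactorsThroughProjective

section StableRetract

variable {A B : Type u} [Ring A] [Ring B]

/-- The `A`-module `N` is a stable retract of the `B`-module `L`: up to a map factoring through a
projective module, the identity of `N` is a composite `N → L → N`. The two maps are semilinear over
`f : A → B` and its retraction `g : B → A`; no `A`-action on `L` is needed. -/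
structure StableRetract (f : A →+* B) (g : B →+* A) [RingHomCompTriple f g (RingHom.id A)]
    (N L : Type u) [AddCommGroup N] [Module A N] [AddCommGroup L] [Module B L] where
  incl : N →ₛₗ[f] L
  proj : L →ₛₗ[g] N
  stable : FactorsThroughProjective (LinearMap.id - proj.comp incl : N →ₗ[A] N)

variable {f : A →+* B} {g : B →+* A} [RingHomCompTriple f g (RingHom.id A)]
  {N L : Type u} [AddCommGroup N] [Module A N] [AddCommGroup L] [Module B L]

/-- Transport of a stable retract along an isomorphism of its target. -/
def StableRetract.ofEquiv (r : StableRetract f g N L) {L' : Type u} [AddCommGroup L'] [Module B L']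
    (e : L ≃ₗ[B] L') : StableRetract f g N L' where
  incl := e.toLinearMap.comp r.incl
  proj := r.proj.comp e.symm.toLinearMap
  stable := by
    convert r.stable using 2
    ext x
    simp

/-- A bijection that is semilinear over `g` exhibits its target as a stable retract of its source,
with no error term. -/
noncomputable def StableRetract.ofBijective (π : L →ₛₗ[g] N) (hπ : Function.Bijective π) :
    StableRetract f g N L :=
  let e := Equiv.ofBijective π hπ
  have he (x : N) : π (e.symm x) = x := e.apply_symm_apply x
  { incl :=
      { toFun := e.symm
        map_add' := fun x y => hπ.1 (by simp only [map_add, he])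
        map_smul' := fun a x => hπ.1 (by
          simp only [map_smulₛₗ, he, RingHomCompTriple.comp_apply, RingHom.id_apply]) }
    proj := π
    stable := ⟨PUnit, inferInstance, inferInstance, inferInstance, 0, 0,
      LinearMap.ext fun x => by simp [he]⟩ }

theorem StableRetract.projective_of_proj_eq_zero (r : StableRetract f g N L) (h : r.proj = 0) :
    Module.Projective A N := by
  have := r.stable
  rw [h, LinearMap.zero_comp, sub_zero] at this
  exact this.projective

section Syzygy

variable {L' Q F : Type u} [AddCommGroup L'] [Module B L'] [AddCommGroup Q] [Module B Q]
  [AddCommGroup F] [Module A F]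

theorem exists_semilinear_restrict_ker {i : L' →ₗ[B] Q} {p : Q →ₗ[B] L} {π : F →ₗ[A] N}
    (hi : Function.Injective i) (hip : Function.Exact i p) (u : N →ₛₗ[f] L) (U : F →ₛₗ[f] Q)
    (hU : ∀ x, p (U x) = u (π x)) :
    ∃ u' : LinearMap.ker π →ₛₗ[f] L', ∀ x, i (u' x) = U x := by
  have hmem (x : LinearMap.ker π) : U.domRestrict (LinearMap.ker π) x ∈ LinearMap.range i :=
    (hip _).1 (by rw [LinearMap.domRestrict_apply, hU, x.2, map_zero])
  refine ⟨(LinearEquiv.ofInjective i hi).symm.toLinearMap.comp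
    ((U.domRestrict (LinearMap.ker π)).codRestrict (LinearMap.range i) hmem), fun x => ?_⟩
  exact congrArg Subtype.val ((LinearEquiv.ofInjective i hi).apply_symm_apply _)

theorem StableRetract.exists_syzygy (r : StableRetract f g N L) [Module.Projective B Q]
    [Module.Projective A F] {i : L' →ₗ[B] Q} {p : Q →ₗ[B] L} (hi : Function.Injective i)
    (hip : Function.Exact i p) (hp : Function.Surjective p) {π : F →ₗ[A] N}
    (hπ : Function.Surjective π) :
    ∃ (V : Q →ₛₗ[g] F) (r' : StableRetract f g (LinearMap.ker π) L'),
      ∀ x, (r'.proj x : F) = V (i x) := by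
  obtain ⟨U, hU⟩ := exists_semilinear_lift p hp (r.incl.comp π)
  obtain ⟨V, hV⟩ := exists_semilinear_lift π hπ (r.proj.comp p)
  obtain ⟨s, hs⟩ := r.stable.exists_lift π hπ
  obtain ⟨u', hu'⟩ := exists_semilinear_restrict_ker hi hip r.incl U hU
  have hvmem (x : L') : V (i x) ∈ LinearMap.ker π := by
    simp [hV, hip.apply_apply_eq_zero]
  let v' : L' →ₛₗ[g] LinearMap.ker π := (V.comp i).codRestrict _ hvmem
  -- `π ∘ (id - V ∘ U)` is the error term of `r` composed with `π`, and `s` lifts that error term.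
  have hcmem (x : F) : (LinearMap.id - V.comp U - s ∘ₗ π : F →ₗ[A] F) x ∈ LinearMap.ker π := by
    have := LinearMap.congr_fun hs (π x)
    simp only [LinearMap.comp_apply, LinearMap.sub_apply, LinearMap.id_apply] at this
    simp [hV, hU, this]
  refine ⟨V, ⟨u', v', F, _, _, inferInstance, (LinearMap.ker π).subtype,
    LinearMap.codRestrict _ _ hcmem, ?_⟩, fun x => rfl⟩
  ext x
  simp [v', hu']

end Syzygy

theorem map_eq_zero_of_ker_smul_eq_zero {Q F : Type*} [AddCommGroup Q] [Module B Q]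
    [Module.Projective B Q] [AddCommGroup F] [Module A F]
    (hg : ∀ b, (∀ i, g i = 0 → i * b = 0) → g b = 0) (V : Q →ₛₗ[g] F) {z : Q}
    (hz : ∀ i, g i = 0 → i • z = 0) : V z = 0 := by
  obtain ⟨s, hs⟩ := Module.Projective.out (R := B) (P := Q)
  have hcoord (q : Q) : g (s z q) = 0 := hg _ fun i hi => by
    rw [← smul_eq_mul, ← Finsupp.smul_apply, ← map_smul, hz i hi, map_zero, Finsupp.zero_apply]
  rw [← hs z, Finsupp.linearCombination_apply, Finsupp.sum, map_sum]
  exact Finset.sum_eq_zero fun q _ => by rw [map_smulₛₗ, hcoord, zero_smul]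

theorem IsSyzygy.exists_stableRetract (hg : ∀ b, (∀ i, g i = 0 → i * b = 0) → g b = 0)
    {M : ModuleCat.{u} A} {M₀ L : ModuleCat.{u} B} {n : ℕ} (h : IsSyzygy M₀ n L)
    (r : StableRetract f g M M₀) :
    ∃ (N : ModuleCat.{u} A) (r' : StableRetract f g N L), IsSyzygy M n N ∧
      (0 < n → ∀ z, (∀ i, g i = 0 → i • z = 0) → r'.proj z = 0) := by
  induction h with
  | refl => exact ⟨M, r, .refl, fun h0 => absurd h0 (lt_irrefl 0)⟩
  | of_iso e _ ih =>
    obtain ⟨N, r', hN, hr'⟩ := ih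
    refine ⟨N, r'.ofEquiv e.toLinearEquiv, hN, fun hn z hz => hr' hn _ fun i hi => ?_⟩
    rw [← map_smul, hz i hi, map_zero]
  | @succ n S hS hP _ ih =>
    obtain ⟨N, r', hN, -⟩ := ih
    have hπ := Finsupp.linearCombination_id_surjective A N
    obtain ⟨V, r'', hr''⟩ := r'.exists_syzygy hS.moduleCat_injective_f
      ((ShortComplex.ShortExact.moduleCat_exact_iff_function_exact S).1 hS.exact)
      hS.moduleCat_surjective_g hπ
    refine ⟨_, r'', .succ (LinearMap.shortExact_shortComplexKer hπ)
      (ModuleCat.projective_of_categoryTheory_projective _) hN, fun _ z hz => Subtype.ext ?_⟩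
    refine (hr'' z).trans (map_eq_zero_of_ker_smul_eq_zero hg V fun i hi => ?_)
    rw [← map_smul, hz i hi, map_zero]

theorem StableRetract.hasProjectiveDimensionLT_of_isSyzygy
    (hg : ∀ b, (∀ i, g i = 0 → i * b = 0) → g b = 0) {M : ModuleCat.{u} A}
    {M₀ L : ModuleCat.{u} B} (r : StableRetract f g M M₀) {n : ℕ} (hn : 0 < n)
    (h : IsSyzygy M₀ n L) (hL : ∀ i, g i = 0 → ∀ z : L, i • z = 0) :
    HasProjectiveDimensionLT M (n + 1) := by
  obtain ⟨N, r', hN, hr'⟩ := h.exists_stableRetract hg r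
  have := r'.projective_of_proj_eq_zero (LinearMap.ext fun z => hr' hn z fun i hi => hL i hi z)
  rw [add_comm]
  exact hN.hasProjectiveDimensionLT (m := 0) (projective_iff_hasProjectiveDimensionLT_one.1
    (ModuleCat.projective_of_categoryTheory_projective N))

end StableRetract

/-! ### Restriction of scalars and reduction modulo an ideal -/

section RestrictScalars

theorem projective_finsupp (R X ι : Type*) [Ring R] [AddCommGroup X] [Module R X]
    [Module.Projective R X] : Module.Projective R (ι →₀ X) := by
  classical exact .of_equiv (finsuppLequivDFinsupp R).symm

theorem projective_trans (R S X : Type*) [Ring R] [Ring S] [Module R S] [IsScalarTower R S S]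
    [AddCommGroup X] [Module R X] [Module S X] [IsScalarTower R S X] [Module.Projective R S]
    [Module.Projective S X] : Module.Projective R X := by
  have := projective_finsupp R S X
  obtain ⟨s, hs⟩ := Module.Projective.out (R := S) (P := X)
  exact .of_split (s.restrictScalars R) ((Finsupp.linearCombination S id).restrictScalars R)
    (LinearMap.ext hs)

theorem projective_restrictScalars_obj {R S : Type u} [Ring R] [Ring S] (σ : R →+* S)
    (hS : Projective ((ModuleCat.restrictScalars.{u} σ).obj (ModuleCat.of S S)))
    {X : ModuleCat.{u} S} (hX : Projective X) :
    Projective ((ModuleCat.restrictScalars σ).obj X) := by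
  let : Module R S := Module.compHom S σ
  let : Module R X := Module.compHom X σ
  have : IsScalarTower R S S := ⟨fun r s t => mul_assoc (σ r) s t⟩
  have : IsScalarTower R S X := ⟨fun r s x => mul_smul (σ r) s x⟩
  have : Module.Projective R S :=
    ModuleCat.projective_of_module_projective ((ModuleCat.restrictScalars.{u} σ).obj (.of S S))
  have : Module.Projective S X := ModuleCat.projective_of_module_projective X
  have := projective_trans R S X
  exact ModuleCat.projective_of_categoryTheory_projective (ModuleCat.of R X)

theorem shortExact_map_restrictScalars {R S : Type u} [Ring R] [Ring S] (σ : R →+* S)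
    {X : ShortComplex (ModuleCat.{u} S)} (hX : X.ShortExact) :
    (X.map (ModuleCat.restrictScalars σ)).ShortExact :=
  ModuleCat.shortComplex_shortExact _
    ((ShortComplex.ShortExact.moduleCat_exact_iff_function_exact X).1 hX.exact)
    hX.moduleCat_injective_f hX.moduleCat_surjective_g

end RestrictScalars

section QuotientFunctor

variable {R : Type u} [Ring R] (I : Ideal R) [I.IsTwoSided]

section Map

variable {L M N : Type*} [AddCommGroup L] [Module R L] [AddCommGroup M] [Module R M]
  [AddCommGroup N] [Module R N]

/-- The map `M ⧸ I M → N ⧸ I N` induced by a linear map `M → N`, linear over `R ⧸ I`. -/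
def quotientMap (h : M →ₗ[R] N) :
    (M ⧸ (I • ⊤ : Submodule R M)) →ₗ[R ⧸ I] (N ⧸ (I • ⊤ : Submodule R N)) :=
  let φ := Submodule.mapQ (I • ⊤) (I • ⊤) h (Submodule.smul_top_le_comap_smul_top I h)
  { φ with
    map_smul' := fun r x => by
      obtain ⟨r, rfl⟩ := Ideal.Quotient.mk_surjective r
      exact map_smul φ r x }

theorem quotientMap_surjective {p : M →ₗ[R] N} (hp : Function.Surjective p) :
    Function.Surjective (quotientMap I p) := by
  intro z
  induction z using Submodule.Quotient.induction_on with | _ z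
  obtain ⟨y, rfl⟩ := hp z
  exact ⟨Submodule.Quotient.mk y, rfl⟩

theorem quotientMap_injective {i : L →ₗ[R] M}
    (hpure : ∀ x, i x ∈ (I • ⊤ : Submodule R M) → x ∈ (I • ⊤ : Submodule R L)) :
    Function.Injective (quotientMap I i) := by
  refine (injective_iff_map_eq_zero (quotientMap I i)).2 fun x => ?_
  induction x using Submodule.Quotient.induction_on with | _ x
  exact fun hx =>
    (Submodule.Quotient.mk_eq_zero _).2 (hpure x ((Submodule.Quotient.mk_eq_zero _).1 hx))

theorem exact_quotientMap {i : L →ₗ[R] M} {p : M →ₗ[R] N} (hip : Function.Exact i p)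
    (hp : Function.Surjective p) : Function.Exact (quotientMap I i) (quotientMap I p) := by
  have hsmul : (I • ⊤ : Submodule R N) = Submodule.map p (I • ⊤) := by
    rw [Submodule.map_smul'', Submodule.map_top, LinearMap.range_eq_top.2 hp]
  intro y
  induction y using Submodule.Quotient.induction_on with | _ y
  refine ⟨fun hy => ?_, ?_⟩
  · have hpy : p y ∈ Submodule.map p (I • ⊤) := hsmul ▸ (Submodule.Quotient.mk_eq_zero _).1 hy
    obtain ⟨y', hy', hyy'⟩ := hpy
    obtain ⟨x, hx⟩ := (hip (y - y')).1 (by rw [map_sub, hyy', sub_self])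
    refine ⟨Submodule.Quotient.mk x, (Submodule.Quotient.eq _).2 ?_⟩
    change i x - y ∈ _
    rw [hx, sub_sub_cancel_left]
    exact neg_mem hy'
  · rintro ⟨x, hx⟩
    induction x using Submodule.Quotient.induction_on with | _ x
    rw [← hx]
    exact congrArg Submodule.Quotient.mk (hip.apply_apply_eq_zero x)

end Map

/-- The functor `M ↦ M ⧸ I M = (R ⧸ I) ⊗ M` on left modules over a noncommutative ring. -/
def quotientFunctor : ModuleCat.{u} R ⥤ ModuleCat.{u} (R ⧸ I) where
  obj M := ModuleCat.of (R ⧸ I) (M ⧸ (I • ⊤ : Submodule R M))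
  map h := ModuleCat.ofHom (quotientMap I h.hom)
  map_id _ := ModuleCat.hom_ext <| LinearMap.ext fun x =>
    Submodule.Quotient.induction_on _ x fun _ => rfl
  map_comp _ _ := ModuleCat.hom_ext <| LinearMap.ext fun x =>
    Submodule.Quotient.induction_on _ x fun _ => rfl

instance : (quotientFunctor I).Additive where
  map_add := ModuleCat.hom_ext <| LinearMap.ext fun x =>
    Submodule.Quotient.induction_on _ x fun _ => rfl

theorem projective_quotient_smul_top (P : Type u) [AddCommGroup P] [Module R P]
    [Module.Projective R P] : Module.Projective (R ⧸ I) (P ⧸ (I • ⊤ : Submodule R P)) := by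
  refine .of_lifting_property'' fun π hπ => ?_
  obtain ⟨l, hl⟩ := exists_semilinear_lift (σ := Ideal.Quotient.mk I) π hπ
    { toFun := Submodule.Quotient.mk (p := (I • ⊤ : Submodule R P))
      map_add' := fun _ _ => rfl
      map_smul' := fun _ _ => rfl }
  have hker : (I • ⊤ : Submodule R P) ≤ LinearMap.ker l := by
    rw [Submodule.smul_le]
    intro r hr x _
    rw [LinearMap.mem_ker, map_smulₛₗ, Ideal.Quotient.eq_zero_iff_mem.2 hr, zero_smul]
  let l' : (P ⧸ (I • ⊤ : Submodule R P)) →ₗ[R ⧸ I] ((P ⧸ (I • ⊤ : Submodule R P)) →₀ R ⧸ I) :=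
    { Submodule.liftQ (I • ⊤) l hker with
      map_smul' := fun r x => Submodule.Quotient.induction_on _ x fun x => by
        obtain ⟨r, rfl⟩ := Ideal.Quotient.mk_surjective r
        exact map_smulₛₗ l r x }
  exact ⟨l', LinearMap.ext fun x => Submodule.Quotient.induction_on _ x hl⟩

theorem projective_quotientFunctor_obj {P : ModuleCat.{u} R} (hP : Projective P) :
    Projective ((quotientFunctor I).obj P) := by
  have := ModuleCat.projective_of_module_projective P
  have := projective_quotient_smul_top I P
  exact ModuleCat.projective_of_categoryTheory_projective (ModuleCat.of _ _)

theorem shortExact_map_quotientFunctor {S : ShortComplex (ModuleCat.{u} R)} (hS : S.ShortExact)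
    (hpure : ∀ x, S.f x ∈ (I • ⊤ : Submodule R S.X₂) → x ∈ (I • ⊤ : Submodule R S.X₁)) :
    (S.map (quotientFunctor I)).ShortExact :=
  ModuleCat.shortComplex_shortExact _
    (exact_quotientMap I ((ShortComplex.ShortExact.moduleCat_exact_iff_function_exact S).1 hS.exact)
      hS.moduleCat_surjective_g)
    (quotientMap_injective I hpure) (quotientMap_surjective I hS.moduleCat_surjective_g)

end QuotientFunctor

/-! ### Base change of bimodules on the right -/

section Bimodule

open Algebra.TensorProduct (includeLeftRingHom includeRight)

variable {k : Type*} {B C D : Type u} [CommRing k] [Ring B] [Ring C] [Ring D]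
  [Algebra k B] [Algebra k C] [Algebra k D]

variable (k B C) in
/-- The forgetful functor from `B ⊗ C`-modules to `C`-modules. -/
noncomputable abbrev restrictRight : ModuleCat.{u} (B ⊗[k] C) ⥤ ModuleCat.{u} C :=
  ModuleCat.restrictScalars (includeRight : C →ₐ[k] B ⊗[k] C).toRingHom

theorem projective_restrictRight_obj [Module.Projective k B] {P : ModuleCat.{u} (B ⊗[k] C)}
    (hP : Projective P) : Projective ((restrictRight k B C).obj P) := by
  refine projective_restrictScalars_obj _ ?_ hP
  let e : C ⊗[k] B ≃ₗ[C] (restrictRight k B C).obj (.of _ (B ⊗[k] C)) :=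
    { (Algebra.TensorProduct.comm k C B).toAddEquiv with
      map_smul' := fun c x => by
        change Algebra.TensorProduct.comm k C B (c • x) =
          (1 ⊗ₜ c) * Algebra.TensorProduct.comm k C B x
        rw [← smul_one_mul c x, map_mul, Algebra.TensorProduct.one_def, smul_tmul', smul_eq_mul,
          mul_one, Algebra.TensorProduct.comm_tmul] }
  have := Module.Projective.of_equiv e
  exact ModuleCat.projective_of_categoryTheory_projective ((restrictRight k B C).obj _)

section BaseChangeRight

variable (B) (q : C →ₐ[k] D)

/-- The kernel of `B ⊗ C → B ⊗ D`; quotients by it compute `- ⊗_C D` on `B ⊗ C`-modules. -/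
abbrev kerRight : Ideal (B ⊗[k] C) :=
  RingHom.ker (Algebra.TensorProduct.map (AlgHom.id k B) q)

/-- The functor `Z ↦ Z ⊗_C D` from `B ⊗ C`-modules to `B`-modules, for surjective `q : C → D`. It is
encoded as the quotient of `Z` by `kerRight B q • Z`, which avoids tensor products over
noncommutative rings. -/
noncomputable def baseChangeRight : ModuleCat.{u} (B ⊗[k] C) ⥤ ModuleCat.{u} B :=
  quotientFunctor (kerRight B q) ⋙
    ModuleCat.restrictScalars ((Ideal.Quotient.mk (kerRight B q)).comp includeLeftRingHom)

instance : (baseChangeRight B q).Additive :=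
  inferInstanceAs (quotientFunctor (kerRight B q) ⋙ ModuleCat.restrictScalars _).Additive

variable {B q}

theorem projective_baseChangeRight_obj [Module.Projective k D] (hq : Function.Surjective q)
    {P : ModuleCat.{u} (B ⊗[k] C)} (hP : Projective P) :
    Projective ((baseChangeRight B q).obj P) := by
  refine projective_restrictScalars_obj _ ?_ (projective_quotientFunctor_obj _ hP)
  have hsurj : Function.Surjective (Algebra.TensorProduct.map (AlgHom.id k B) q) :=
    TensorProduct.map_surjective Function.surjective_id hq
  let X := (ModuleCat.restrictScalars.{u}
    ((Ideal.Quotient.mk (kerRight B q)).comp includeLeftRingHom)).obj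
      (.of _ ((B ⊗[k] C) ⧸ kerRight B q))
  let e : X ≃ₗ[B] B ⊗[k] D :=
    { (RingHom.quotientKerEquivOfSurjective hsurj).toAddEquiv with
      map_smul' := fun b x => by
        obtain ⟨x, rfl⟩ := Ideal.Quotient.mk_surjective x
        change Algebra.TensorProduct.map (AlgHom.id k B) q ((b ⊗ₜ 1) * x) =
          b • Algebra.TensorProduct.map (AlgHom.id k B) q x
        rw [map_mul, ← smul_one_mul b, Algebra.TensorProduct.one_def, smul_tmul', smul_eq_mul,
          mul_one, Algebra.TensorProduct.map_tmul, AlgHom.id_apply, map_one] }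
  have := Module.Projective.of_equiv e.symm
  exact ModuleCat.projective_of_categoryTheory_projective X

theorem kerRight_induction (hq : Function.Surjective q) {p : B ⊗[k] C → Prop} (zero : p 0)
    (add : ∀ s t, p s → p t → p (s + t)) (tmul : ∀ b c, q c = 0 → p (b ⊗ₜ c)) {t : B ⊗[k] C}
    (ht : t ∈ kerRight B q) : p t := by
  rw [kerRight, Algebra.TensorProduct.lTensor_ker q hq, ← Submodule.restrictScalars_mem k,
    Ideal.map_includeRight_eq] at ht
  obtain ⟨s, rfl⟩ := ht
  induction s with
  | zero => rwa [map_zero]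
  | add s t hs ht => rw [map_add]; exact add _ _ hs ht
  | tmul b c => exact tmul b c c.2

theorem map_mem_kerRight_smul_top (hq : Function.Surjective q) {X Y : Type*} [AddCommGroup X]
    [Module (B ⊗[k] C) X] [AddCommGroup Y] [Module (B ⊗[k] C) Y] (r : X →+ Y)
    (hr : ∀ (c : C) (x : X), r ((1 ⊗ₜ[k] c : B ⊗[k] C) • x) = (1 ⊗ₜ[k] c : B ⊗[k] C) • r x)
    {x : X} (hx : x ∈ (kerRight B q • ⊤ : Submodule (B ⊗[k] C) X)) :
    r x ∈ (kerRight B q • ⊤ : Submodule (B ⊗[k] C) Y) := by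
  induction hx using Submodule.smul_induction_on' with
  | smul t ht x _ =>
    refine kerRight_induction hq (p := fun t => r (t • x) ∈ (kerRight B q • ⊤ : Submodule _ Y))
      ?_ (fun s t hs ht => ?_) (fun b c hc => ?_) ht
    · rw [zero_smul, map_zero]
      exact zero_mem _
    · rw [add_smul, map_add]
      exact add_mem hs ht
    · rw [← one_mul b, ← mul_one c, ← Algebra.TensorProduct.tmul_mul_tmul, mul_smul, hr]
      exact Submodule.smul_mem_smul (by simp [RingHom.mem_ker, hc]) Submodule.mem_top
  | add x _ y _ hx hy =>
    rw [map_add]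
    exact add_mem hx hy

theorem shortExact_map_baseChangeRight (hq : Function.Surjective q)
    {S : ShortComplex (ModuleCat.{u} (B ⊗[k] C))} (hS : S.ShortExact)
    (hX₃ : Projective ((restrictRight k B C).obj S.X₃)) :
    (S.map (baseChangeRight B q)).ShortExact := by
  -- The sequence splits over `C`, which makes `S.f` injective modulo `kerRight B q`.
  have hρ := shortExact_map_restrictScalars (includeRight : C →ₐ[k] B ⊗[k] C).toRingHom hS
  have : Projective (S.map (restrictRight k B C)).X₃ := hX₃
  let s := hρ.splittingOfProjective
  have hs (x : S.X₁) : s.r (S.f x) = x := ConcreteCategory.congr_hom s.f_r x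
  refine shortExact_map_restrictScalars _
    (shortExact_map_quotientFunctor (kerRight B q) hS fun x hx => ?_)
  rw [← hs x]
  exact map_mem_kerRight_smul_top hq (X := S.X₂) (Y := S.X₁) s.r.hom.toAddMonoidHom
    (map_smul s.r.hom) hx

theorem projective_restrictRight_X₁ [Module.Projective k B]
    {S : ShortComplex (ModuleCat.{u} (B ⊗[k] C))} (hS : S.ShortExact) (hX₂ : Projective S.X₂)
    (hX₃ : Projective ((restrictRight k B C).obj S.X₃)) :
    Projective ((restrictRight k B C).obj S.X₁) := by
  have hρ := shortExact_map_restrictScalars (includeRight : C →ₐ[k] B ⊗[k] C).toRingHom hS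
  have : Projective (S.map (restrictRight k B C)).X₃ := hX₃
  have : Projective (S.map (restrictRight k B C)).X₂ := projective_restrictRight_obj hX₂
  let s := hρ.splittingOfProjective
  exact Retract.projective (Y := (S.map (restrictRight k B C)).X₂) ⟨_, _, s.f_r⟩

theorem IsSyzygy.baseChangeRight [Module.Projective k B] [Module.Projective k D]
    (hq : Function.Surjective q) {N Z : ModuleCat.{u} (B ⊗[k] C)} {n : ℕ} (h : IsSyzygy N n Z)
    (hN : Projective ((restrictRight k B C).obj N)) :
    IsSyzygy ((baseChangeRight B q).obj N) n ((baseChangeRight B q).obj Z) ∧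
      Projective ((restrictRight k B C).obj Z) := by
  induction h with
  | refl => exact ⟨.refl, hN⟩
  | of_iso e _ ih =>
    exact ⟨.of_iso ((TwistedPeriodic.baseChangeRight B q).mapIso e) ih.1,
      Projective.of_iso ((restrictRight k B C).mapIso e) ih.2⟩
  | succ hS hP _ ih =>
    exact ⟨.succ (shortExact_map_baseChangeRight hq hS ih.2)
      (projective_baseChangeRight_obj hq hP) ih.1,
      projective_restrictRight_X₁ hS hP ih.2⟩

end BaseChangeRight

end Bimodule

section EnvelopingAlgebra

open MulOpposite (op unop)

variable {k B D : Type} [Field k] [Ring B] [Algebra k B] [Ring D] [Algebra k D]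

variable (k B) in
/-- The identification of the carrier of the regular bimodule with `B`. -/
noncomputable def regularEquiv : regularBimodule k B ≃+ B :=
  AddEquiv.refl B

/-- The identification of the carrier of the bimodule `B_φ` with `B`. -/
noncomputable def twistedEquiv (φ : B ≃ₐ[k] B) : twistedBimodule k B φ ≃+ B :=
  AddEquiv.refl B

theorem regularEquiv_tmul_smul (b c : B) (x : regularBimodule k B) :
    regularEquiv k B ((b ⊗ₜ[k] op c : B ⊗[k] Bᵐᵒᵖ) • x) = b * regularEquiv k B x * c :=
  (mul_assoc b (regularEquiv k B x) c).symm

theorem twistedEquiv_tmul_smul (φ : B ≃ₐ[k] B) (b c : B) (x : twistedBimodule k B φ) :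
    twistedEquiv φ ((b ⊗ₜ[k] op c : B ⊗[k] Bᵐᵒᵖ) • x) = b * twistedEquiv φ x * φ c :=
  (mul_assoc b (twistedEquiv φ x) (φ c)).symm

theorem projective_restrictRight_regularBimodule :
    Projective ((restrictRight k B Bᵐᵒᵖ).obj (regularBimodule k B)) := by
  let e : (restrictRight k B Bᵐᵒᵖ).obj (regularBimodule k B) ≃ₗ[Bᵐᵒᵖ] Bᵐᵒᵖ :=
    { (regularEquiv k B).trans MulOpposite.opAddEquiv with
      map_smul' := fun c x =>
        congrArg op ((regularEquiv_tmul_smul 1 (unop c) x).trans (by rw [one_mul]; rfl)) }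
  have := Module.Projective.of_equiv e.symm
  exact ModuleCat.projective_of_categoryTheory_projective ((restrictRight k B Bᵐᵒᵖ).obj _)

variable {q : B →ₐ[k] D}

theorem surjective_op (hq : Function.Surjective q) : Function.Surjective q.op :=
  MulOpposite.op_surjective.comp (hq.comp MulOpposite.unop_surjective)

theorem one_tmul_op_mem_kerRight {c : B} (hc : q c = 0) :
    (1 ⊗ₜ op c : B ⊗[k] Bᵐᵒᵖ) ∈ kerRight B q.op := by
  simp [RingHom.mem_ker, hc]

theorem mem_kerRight_smul_top_twistedBimodule (φ : B ≃ₐ[k] B) {x : twistedBimodule k B φ}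
    (hx : q (φ.symm (twistedEquiv φ x)) = 0) :
    x ∈ (kerRight B q.op • ⊤ : Submodule (B ⊗[k] Bᵐᵒᵖ) (twistedBimodule k B φ)) := by
  convert Submodule.smul_mem_smul (one_tmul_op_mem_kerRight hx)
    (Submodule.mem_top (x := (twistedEquiv φ).symm 1))
  apply (twistedEquiv φ).injective
  rw [twistedEquiv_tmul_smul, AddEquiv.apply_symm_apply, one_mul, one_mul, φ.apply_symm_apply]

theorem mem_kerRight_smul_top_regularBimodule (hq : Function.Surjective q)
    {x : regularBimodule k B} :
    x ∈ (kerRight B q.op • ⊤ : Submodule (B ⊗[k] Bᵐᵒᵖ) (regularBimodule k B)) ↔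
      q (regularEquiv k B x) = 0 := by
  constructor
  · intro hx
    induction hx using Submodule.smul_induction_on' with
    | smul t ht x _ =>
      refine kerRight_induction (surjective_op hq) (p := fun t => q (regularEquiv k B (t • x)) = 0)
        ?_ (fun s t hs ht => ?_) (fun b c hc => ?_) ht
      · rw [zero_smul, map_zero, map_zero]
      · rw [add_smul, map_add, map_add, hs, ht, add_zero]
      · have hc' : q (unop c) = 0 := MulOpposite.op_injective hc
        rw [← MulOpposite.op_unop c, regularEquiv_tmul_smul, map_mul, hc', mul_zero]
    | add x _ y _ hx hy => rw [map_add, map_add, hx, hy, add_zero]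
  · intro hx
    convert Submodule.smul_mem_smul (one_tmul_op_mem_kerRight hx)
      (Submodule.mem_top (x := (regularEquiv k B).symm 1))
    apply (regularEquiv k B).injective
    rw [regularEquiv_tmul_smul, AddEquiv.apply_symm_apply, one_mul, one_mul]

theorem exists_bijective_baseChangeRight_regularBimodule (hq : Function.Surjective q) :
    ∃ π : (baseChangeRight B q.op).obj (regularBimodule k B) →ₛₗ[q.toRingHom] D,
      Function.Bijective π := by
  let h : regularBimodule k B →+ D :=
    q.toRingHom.toAddMonoidHom.comp (regularEquiv k B).toAddMonoidHom
  have hker : Submodule.toAddSubgroup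
      (kerRight B q.op • ⊤ : Submodule (B ⊗[k] Bᵐᵒᵖ) (regularBimodule k B)) = h.ker :=
    AddSubgroup.ext fun x => by
      rw [Submodule.mem_toAddSubgroup, mem_kerRight_smul_top_regularBimodule hq]
      rfl
  let e := (QuotientAddGroup.quotientAddEquivOfEq hker).trans
    (QuotientAddGroup.quotientKerEquivOfSurjective h (hq.comp (regularEquiv k B).surjective))
  refine ⟨{ e with
    map_smul' := fun b x => Submodule.Quotient.induction_on _ x fun x => ?_ }, e.bijective⟩
  change q (regularEquiv k B ((b ⊗ₜ op 1 : B ⊗[k] Bᵐᵒᵖ) • x)) = q b * q (regularEquiv k B x)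
  rw [regularEquiv_tmul_smul, mul_one, map_mul]

theorem smul_eq_zero_baseChangeRight_twistedBimodule (φ : B ≃ₐ[k] B) {i : B}
    (hi : ∀ x, q (φ.symm (i * x)) = 0)
    (z : (baseChangeRight B q.op).obj (twistedBimodule k B φ)) : i • z = 0 := by
  refine Submodule.Quotient.induction_on _ z fun x => ?_
  refine (Submodule.Quotient.mk_eq_zero _).2 (mem_kerRight_smul_top_twistedBimodule φ ?_)
  change q (φ.symm (twistedEquiv φ ((i ⊗ₜ op 1 : B ⊗[k] Bᵐᵒᵖ) • x))) = 0
  rw [twistedEquiv_tmul_smul, map_one, mul_one, hi]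

theorem exists_hasProjectiveDimensionLT_quotient_jacobson {A : Type} [Ring A] [Algebra k A]
    {f : A →+* B} {g : B →ₐ[k] A} [RingHomCompTriple f g.toRingHom (RingHom.id A)]
    (hg : ∀ b, (∀ i, g i = 0 → i * b = 0) → g b = 0)
    (hrad : RingHom.ker g ≤ Ring.jacobson B) (h : IsTwistedPeriodicAlgebra k B) :
    ∃ n, HasProjectiveDimensionLT (ModuleCat.of A (A ⧸ Ring.jacobson A)) (n + 1) := by
  obtain ⟨n, φ, hn, hseq⟩ := h
  let J := Ring.jacobson A
  let q : B →ₐ[k] A ⧸ J := (Ideal.Quotient.mkₐ k J).comp g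
  have hgsurj : Function.Surjective g := fun a =>
    ⟨f a, RingHomCompTriple.comp_apply (σ₁₂ := f) (σ₂₃ := g.toRingHom) (x := a)⟩
  have hq : Function.Surjective q := Ideal.Quotient.mk_surjective.comp hgsurj
  have hsyz := ((isSyzygy_of_hasProjExactSeq hseq).baseChangeRight (surjective_op hq)
    projective_restrictRight_regularBimodule).1
  obtain ⟨π, hπ⟩ := exists_bijective_baseChangeRight_regularBimodule hq
  have hsmul (a : A) (y : A ⧸ J) : Ideal.Quotient.mk J a • y = a • y :=
    Submodule.Quotient.induction_on J y fun _ => rfl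
  let πg : (baseChangeRight B q.op).obj (regularBimodule k B) →ₛₗ[g.toRingHom] A ⧸ J :=
    { π with
      map_smul' := fun b x => (map_smulₛₗ π b x).trans (hsmul (g b) (π x)) }
  have : RingHomSurjective g.toRingHom := ⟨hgsurj⟩
  refine ⟨n, (StableRetract.ofBijective (f := f) πg hπ).hasProjectiveDimensionLT_of_isSyzygy
    (M := ModuleCat.of A (A ⧸ J)) hg hn hsyz fun i hi =>
    smul_eq_zero_baseChangeRight_twistedBimodule φ fun x => ?_⟩
  have : RingHomSurjective φ.symm.toRingEquiv.toRingHom := ⟨φ.symm.surjective⟩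
  have hmem : φ.symm (i * x) ∈ Ring.jacobson B :=
    Ring.le_comap_jacobson φ.symm.toRingEquiv.toRingHom (Ideal.mul_mem_right x _ (hrad hi))
  exact Ideal.Quotient.eq_zero_iff_mem.2 (Ring.le_comap_jacobson g.toRingHom hmem)

end EnvelopingAlgebra

/-! ### From the semisimple quotient to all modules -/

section GlobalDimension

variable {R : Type u} [Ring R]

theorem hasProjectiveDimensionLT_ker {F M : Type u} [AddCommGroup F] [Module R F]
    [Module.Projective R F] [AddCommGroup M] [Module R M] {p : F →ₗ[R] M}
    (hp : Function.Surjective p) {n : ℕ}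
    (h : HasProjectiveDimensionLT (ModuleCat.of R M) (n + 2)) :
    HasProjectiveDimensionLT (ModuleCat.of R (LinearMap.ker p)) (n + 1) :=
  ((LinearMap.shortExact_shortComplexKer hp).hasProjectiveDimensionLT_X₃_iff n
    (ModuleCat.projective_of_categoryTheory_projective (ModuleCat.of R F))).1 h

theorem exact_finsuppMapRange (ι : Type*) {L M N : Type*} [AddCommGroup L] [Module R L]
    [AddCommGroup M] [Module R M] [AddCommGroup N] [Module R N] {i : L →ₗ[R] M} {p : M →ₗ[R] N}
    (hi : Function.Injective i) (hip : Function.Exact i p) :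
    Function.Exact (Finsupp.mapRange.linearMap (α := ι) i)
      (Finsupp.mapRange.linearMap (α := ι) p) := by
  rw [LinearMap.exact_iff, Finsupp.ker_mapRange,
    Finsupp.range_mapRange_linearMap i (LinearMap.ker_eq_bot.2 hi), hip.linearMap_ker_eq]

theorem hasProjectiveDimensionLT_finsupp_of_ker (ι : Type u) {F M : Type u} [AddCommGroup F]
    [Module R F] [Module.Projective R F] [AddCommGroup M] [Module R M] {p : F →ₗ[R] M}
    (hp : Function.Surjective p) {n : ℕ}
    (h : HasProjectiveDimensionLT (ModuleCat.of R (ι →₀ LinearMap.ker p)) (n + 1)) :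
    HasProjectiveDimensionLT (ModuleCat.of R (ι →₀ M)) (n + 2) := by
  have hexact := exact_finsuppMapRange ι (LinearMap.ker p).subtype_injective
    (LinearMap.exact_subtype_ker_map p)
  let S : ShortComplex (ModuleCat.{u} R) :=
    { X₁ := .of R (ι →₀ LinearMap.ker p)
      X₂ := .of R (ι →₀ F)
      X₃ := .of R (ι →₀ M)
      f := ModuleCat.ofHom (Finsupp.mapRange.linearMap (LinearMap.ker p).subtype)
      g := ModuleCat.ofHom (Finsupp.mapRange.linearMap p)
      zero := ModuleCat.hom_ext hexact.linearMap_comp_eq_zero }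
  have hS : S.ShortExact := ModuleCat.shortComplex_shortExact S hexact
    (Finsupp.mapRange_injective _ rfl Subtype.val_injective)
    (Finsupp.mapRange_surjective _ (map_zero p) hp)
  have := projective_finsupp R F ι
  exact (hS.hasProjectiveDimensionLT_X₃_iff n (ModuleCat.projective_of_categoryTheory_projective
    (ModuleCat.of R (ι →₀ F)))).2 h

theorem hasProjectiveDimensionLT_finsupp (ι : Type u) {M : Type u} [AddCommGroup M] [Module R M]
    {n : ℕ} (h : HasProjectiveDimensionLT (ModuleCat.of R M) (n + 1)) :
    HasProjectiveDimensionLT (ModuleCat.of R (ι →₀ M)) (n + 1) := by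
  induction n generalizing M with
  | zero =>
    rw [zero_add, ← projective_iff_hasProjectiveDimensionLT_one] at h ⊢
    have : Module.Projective R M := ModuleCat.projective_of_module_projective (ModuleCat.of R M)
    have := projective_finsupp R M ι
    exact ModuleCat.projective_of_categoryTheory_projective (ModuleCat.of R (ι →₀ M))
  | succ n ih =>
    have hp := Finsupp.linearCombination_id_surjective R M
    exact hasProjectiveDimensionLT_finsupp_of_ker ι hp (ih (hasProjectiveDimensionLT_ker hp h))

theorem hasProjectiveDimensionLT_of_isTorsionBySet {I : Ideal R} [I.IsTwoSided]
    [IsSemisimpleRing (R ⧸ I)] {n : ℕ}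
    (h : HasProjectiveDimensionLT (ModuleCat.of R (R ⧸ I)) (n + 1)) {M : Type u} [AddCommGroup M]
    [Module R M] (hM : Module.IsTorsionBySet R M I) :
    HasProjectiveDimensionLT (ModuleCat.of R M) (n + 1) := by
  let : Module (R ⧸ I) M := hM.module
  have : IsScalarTower R (R ⧸ I) M := hM.isScalarTower
  have : Module.Projective (R ⧸ I) M := Module.projective_of_isSemisimpleRing (R ⧸ I) M
  obtain ⟨s, hs⟩ := Module.Projective.out (R := R ⧸ I) (P := M)
  have := hasProjectiveDimensionLT_finsupp M h
  let r : Retract (ModuleCat.of R M) (ModuleCat.of R (M →₀ R ⧸ I)) :=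
    { i := ModuleCat.ofHom (s.restrictScalars R)
      r := ModuleCat.ofHom ((Finsupp.linearCombination (R ⧸ I) id).restrictScalars R)
      retract := ModuleCat.hom_ext (LinearMap.ext hs) }
  exact r.hasProjectiveDimensionLT (n + 1)

theorem hasProjectiveDimensionLT_of_quotient_jacobson [IsSemiprimaryRing R] {n : ℕ}
    (h : HasProjectiveDimensionLT (ModuleCat.of R (R ⧸ Ring.jacobson R)) (n + 1)) (M : Type u)
    [AddCommGroup M] [Module R M] : HasProjectiveDimensionLT (ModuleCat.of R M) (n + 1) := by
  refine IsSemiprimaryRing.induction R R M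
    (P := fun M _ _ _ => HasProjectiveDimensionLT (ModuleCat.of R M) (n + 1)) ?_ ?_
  · intro M _ _ _ _ _ hM
    exact hasProjectiveDimensionLT_of_isTorsionBySet h hM
  · intro M _ _ _ _ N hN hMN
    have hker : HasProjectiveDimensionLT (ModuleCat.of R (LinearMap.ker N.mkQ)) (n + 1) := by
      rwa [N.ker_mkQ]
    exact (LinearMap.shortExact_shortComplexKer N.mkQ_surjective).hasProjectiveDimensionLT_X₂
      (n + 1) hker hMN

end GlobalDimension

section ProjDimLE

variable {R M : Type} [Ring R] [AddCommGroup M] [Module R M]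

theorem projDimLE_zero_of_projective [Module.Projective R M] : ProjDimLE R M 0 := by
  let P : ℕ → ModuleCat.{0} R
    | 0 => .of R M
    | _ + 1 => .of R PUnit
  refine ⟨P, fun _ => 0, LinearMap.id, ?_, Function.surjective_id, ?_, fun i => ?_, ?_⟩
  · rintro (_ | _)
    · exact ‹Module.Projective R M›
    · exact inferInstanceAs (Module.Projective R PUnit)
  · rw [LinearMap.range_zero, LinearMap.ker_id]
  · exact Subsingleton.elim (α := Submodule R PUnit) _ _
  · rintro (_ | i) hi
    · exact absurd hi (lt_irrefl 0)
    · exact inferInstanceAs (Subsingleton PUnit)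

theorem projDimLE_succ_of_ker {F : Type} [AddCommGroup F] [Module R F] [Module.Projective R F]
    {p : F →ₗ[R] M} (hp : Function.Surjective p) {d : ℕ} (h : ProjDimLE R (LinearMap.ker p) d) :
    ProjDimLE R M (d + 1) := by
  obtain ⟨P, f, π, hP, hπ, h0, hexact, hd⟩ := h
  let Q : ℕ → ModuleCat.{0} R
    | 0 => .of R F
    | i + 1 => P i
  let f' : ∀ i, Q (i + 1) →ₗ[R] Q i
    | 0 => (LinearMap.ker p).subtype ∘ₗ π
    | i + 1 => f i
  refine ⟨Q, f', p, ?_, hp, ?_, ?_, ?_⟩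
  · rintro (_ | i)
    · exact ‹Module.Projective R F›
    · exact hP i
  · exact (LinearMap.range_comp_of_range_eq_top _ (LinearMap.range_eq_top.2 hπ)).trans
      (Submodule.range_subtype _)
  · rintro (_ | i)
    · exact h0.trans (LinearMap.ker_comp_of_ker_eq_bot π (Submodule.ker_subtype _)).symm
    · exact hexact i
  · rintro (_ | i) hi
    · exact absurd hi (Nat.not_lt_zero _)
    · exact hd i (Nat.lt_of_succ_lt_succ hi)

theorem projDimLE_of_hasProjectiveDimensionLT {d : ℕ}
    (h : HasProjectiveDimensionLT (ModuleCat.of R M) (d + 1)) : ProjDimLE R M d := by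
  induction d generalizing M with
  | zero =>
    have : Projective (ModuleCat.of R M) := projective_iff_hasProjectiveDimensionLT_one.2 h
    have : Module.Projective R M := ModuleCat.projective_of_module_projective (ModuleCat.of R M)
    exact projDimLE_zero_of_projective
  | succ d ih =>
    have hp := Finsupp.linearCombination_id_surjective R M
    exact projDimLE_succ_of_ker hp (ih (hasProjectiveDimensionLT_ker hp h))

end ProjDimLE

section TrivialExtension

variable {k A : Type} [Field k] [Ring A] [Algebra k A]

theorem fst_eq_zero_of_ker_fst_mul_eq_zero {b : TrivialExtension k A}
    (h : ∀ i : TrivialExtension k A, i.fst = 0 → i * b = 0) : b.fst = 0 := by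
  refine (Module.forall_dual_apply_eq_zero_iff k b.fst).1 fun ξ => ?_
  have hb := congrArg TrivSqZeroExt.snd (h (.inr ξ) (TrivSqZeroExt.fst_inr _ ξ))
  rw [TrivSqZeroExt.snd_mul, TrivSqZeroExt.fst_inr, TrivSqZeroExt.snd_inr, zero_smul, zero_add,
    TrivSqZeroExt.snd_zero] at hb
  have hξ : ξ (b.fst * 1) = 0 := DFunLike.congr_fun hb 1
  rwa [mul_one] at hξ

theorem ker_fstHom_le_jacobson :
    RingHom.ker (TrivSqZeroExt.fstHom k A (Module.Dual k A)) ≤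
      Ring.jacobson (TrivialExtension k A) := by
  intro i hi
  have hi0 : i.fst = 0 := hi
  rw [← Ideal.jacobson_bot, Ideal.mem_jacobson_iff]
  intro y
  have hiyi : i * y * i = 0 := by
    ext <;> simp [hi0]
  refine ⟨1 - y * i, Ideal.mem_bot.2 ?_⟩
  calc (1 - y * i) * y * i + (1 - y * i) - 1 = -(y * (i * y * i)) := by
        simp only [sub_mul, one_mul, mul_assoc]
        abel
    _ = 0 := by rw [hiyi, mul_zero, neg_zero]

instance : RingHomCompTriple (TrivSqZeroExt.inlHom A (Module.Dual k A))
    (TrivSqZeroExt.fstHom k A (Module.Dual k A)).toRingHom (RingHom.id A) :=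
  ⟨RingHom.ext fun a => TrivSqZeroExt.fst_inl (Module.Dual k A) a⟩

end TrivialExtension

end TwistedPeriodic

section DualBimodule

variable (k A : Type) [Field k] [Ring A] [Algebra k A]

theorem finite_globalDimension_of_trivialExtension_twistedPeriodic_general [IsSemiprimaryRing A]
    (h : IsTwistedPeriodicAlgebra k (TrivialExtension k A)) : HasFiniteGlobalDimension A := by
  obtain ⟨n, hn⟩ := TwistedPeriodic.exists_hasProjectiveDimensionLT_quotient_jacobson
    (f := TrivSqZeroExt.inlHom A (Module.Dual k A)) (g := TrivSqZeroExt.fstHom k A _)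
    (fun _ => TwistedPeriodic.fst_eq_zero_of_ker_fst_mul_eq_zero)
    TwistedPeriodic.ker_fstHom_le_jacobson h
  exact ⟨n, fun M _ _ => TwistedPeriodic.projDimLE_of_hasProjectiveDimensionLT
    (TwistedPeriodic.hasProjectiveDimensionLT_of_quotient_jacobson hn M)⟩

/-- Let `A` be a finite-dimensional `k`-algebra such that `A/rad A` is a
separable `k`-algebra. If the trivial extension algebra `T(A)` is twisted periodic, then `A`
has finite global dimension. -/
theorem finite_globalDimension_of_trivialExtension_twistedPeriodic
    [FiniteDimensional k A]
    (hsep : ∀ (S : Type) [Ring S] [Algebra k S] (π : A →ₐ[k] S),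
      Function.Surjective π → RingHom.ker π = Ideal.jacobson (⊥ : Ideal A) →
      ∀ (K : Type) [Field K] [Algebra k K], IsSemisimpleRing (K ⊗[k] S))
    (h : IsTwistedPeriodicAlgebra k (TrivialExtension k A)) :
    HasFiniteGlobalDimension A := by
  have := IsArtinianRing.of_finite k A
  exact finite_globalDimension_of_trivialExtension_twistedPeriodic_general k A h

end DualBimodule
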